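/- arXiv:2605.22746 — 2 statements merged into one kernel-verified Lean document; each statement's English description precedes it below -/
import Mathlib

section
/- Let α ∈ ℝ_{>0}^K, let π be a Dirichlet(α)-distributed random vector, set α₀ = Σ_{j=1}^K α_j and p = α/α₀. Let y ∈ {0,1}^K be a one-hot vector. Then the Dirichlet-expected mean-squared-error loss satisfies 𝔼[Σ_{k=1}^K (y_k − π_k)²] = Σ_{k=1}^K (y_k − p_k)² + Σ_{k=1}^K p_k(1 − p_k)/(α₀ + 1). -/
open MeasureTheory ProbabilityTheory

/-- Ratio of Gamma functions. -/
noncomputable def gratio (a : ℝ) (n : ℕ) : ℝ := Real.Gamma (a + n) / Real.Gamma a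

lemma gratio_pos {a : ℝ} (ha : 0 < a) (n : ℕ) : 0 < gratio a n :=
  div_pos (Real.Gamma_pos_of_pos (by positivity)) (Real.Gamma_pos_of_pos ha)

lemma gratio_zero {a : ℝ} (ha : 0 < a) : gratio a 0 = 1 := by
  simp [gratio, (Real.Gamma_pos_of_pos ha).ne']

lemma gratio_one {a : ℝ} (ha : 0 < a) : gratio a 1 = a := by
  have := (Real.Gamma_pos_of_pos ha).ne'
  simp only [gratio, Nat.cast_one, Real.Gamma_add_one ha.ne']
  field_simp

lemma gratio_two {a : ℝ} (ha : 0 < a) : gratio a 2 = a * (a + 1) := by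
  have := (Real.Gamma_pos_of_pos ha).ne'
  have h : a + ((2 : ℕ) : ℝ) = (a + 1) + 1 := by push_cast; ring
  simp only [gratio, h, Real.Gamma_add_one ha.ne', Real.Gamma_add_one (show a + 1 ≠ 0 by positivity)]
  field_simp

lemma measurable_gammaPDF' (a r : ℝ) : Measurable (gammaPDF a r) :=
  (measurable_gammaPDFReal a r).ennreal_ofReal

lemma lintegral_gamma_pow_exp {a : ℝ} (ha : 0 < a) {t : ℝ} (ht : 0 < t) (n : ℕ) :
    ∫⁻ x, ENNReal.ofReal (x ^ n * Real.exp (-(t * x))) ∂(gammaMeasure a 1) =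
      ENNReal.ofReal (gratio a n * (1 + t) ^ (-(a + n))) := by
  have hg := Real.Gamma_pos_of_pos ha
  have hg' : 0 < Real.Gamma (a + n) := Real.Gamma_pos_of_pos (by positivity)
  have h1t : 0 < 1 + t := by linarith
  rw [gammaMeasure, lintegral_withDensity_eq_lintegral_mul _ (measurable_gammaPDF' _ _)
    (by fun_prop)]
  have key : ∀ᵐ x : ℝ, (gammaPDF a 1 * fun x => ENNReal.ofReal (x ^ n * Real.exp (-(t * x)))) x =
      ENNReal.ofReal (gratio a n * (1 + t) ^ (-(a + n))) * gammaPDF (a + n) (1 + t) x := by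
    have h0 : ∀ᵐ x : ℝ, x ≠ 0 := by simp [ae_iff]
    filter_upwards [h0] with x hx
    rcases lt_or_gt_of_ne hx with hx | hx
    · simp [gammaPDF_of_neg hx]
    · have hc : 0 ≤ gratio a n * (1 + t) ^ (-(a + n)) :=
        mul_nonneg (gratio_pos ha n).le (by positivity)
      simp only [Pi.mul_apply, gammaPDF_of_nonneg hx.le]
      rw [← ENNReal.ofReal_mul (by positivity), ← ENNReal.ofReal_mul hc]
      congr 1
      have e1 : x ^ (a + n - 1) = x ^ (a - 1) * x ^ n := by
        rw [← Real.rpow_natCast x n, ← Real.rpow_add hx]; congr 1; ring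
      have e2 : Real.exp (-((1 + t) * x)) = Real.exp (-(1 * x)) * Real.exp (-(t * x)) := by
        rw [← Real.exp_add]; congr 1; ring
      have e3 : (1 + t) ^ (-(a + n)) * (1 + t) ^ (a + n) = 1 := by
        rw [← Real.rpow_add h1t]; simp
      rw [e1, e2, Real.one_rpow, gratio]
      calc _ = 1 / Real.Gamma a * x ^ (a - 1) * Real.exp (-(1 * x)) *
            (x ^ n * Real.exp (-(t * x))) * ((1 + t) ^ (-(a + n)) * (1 + t) ^ (a + n)) := by
              rw [e3, mul_one]
        _ = _ := by field_simp
  rw [lintegral_congr_ae key, lintegral_const_mul _ (measurable_gammaPDF' _ _),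
    lintegral_gammaPDF_eq_one (by positivity) h1t, mul_one]

lemma lintegral_Ioi_pow_exp {S : ℝ} (hS : 0 < S) (m : ℕ) :
    ∫⁻ t in Set.Ioi (0 : ℝ), ENNReal.ofReal (t ^ m * Real.exp (-(S * t))) =
      ENNReal.ofReal (m.factorial / S ^ (m + 1)) := by
  have key : ∀ t ∈ Set.Ioi (0 : ℝ), ENNReal.ofReal (t ^ m * Real.exp (-(S * t))) =
      ENNReal.ofReal (m.factorial / S ^ (m + 1)) * gammaPDF (m + 1) S t := by
    intro t ht
    have ht : 0 < t := ht
    rw [gammaPDF_of_nonneg ht.le, ← ENNReal.ofReal_mul (by positivity)]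
    congr 1
    have e : S ^ ((m : ℝ) + 1) = S ^ (m + 1) := by
      rw [← Real.rpow_natCast]; push_cast; rfl
    rw [Real.Gamma_nat_eq_factorial, add_sub_cancel_right, Real.rpow_natCast, e]
    field_simp
  rw [setLIntegral_congr_fun measurableSet_Ioi key, lintegral_const_mul _ (measurable_gammaPDF' _ _)]
  have : ∫⁻ t in Set.Ioi (0 : ℝ), gammaPDF (m + 1) S t = 1 := by
    rw [← lintegral_gammaPDF_eq_one (a := (m : ℝ) + 1) (r := S) (by positivity) hS,
      ← Measure.restrict_univ (μ := (volume : Measure ℝ)), Measure.restrict_univ,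
      ← lintegral_add_compl (μ := volume) _ (measurableSet_Ici (a := (0 : ℝ))), Set.compl_Ici,
      lintegral_gammaPDF_of_nonpos le_rfl, add_zero, setLIntegral_congr Ioi_ae_eq_Ici]
  rw [this, mul_one]

lemma gamma_ae_pos {a : ℝ} : ∀ᵐ x ∂(gammaMeasure a 1), 0 < x := by
  rw [ae_iff, gammaMeasure, withDensity_apply _ (by measurability)]
  have : {x : ℝ | ¬ 0 < x} = Set.Iic 0 := by ext; simp
  rw [this, ← setLIntegral_congr Iio_ae_eq_Iic, lintegral_gammaPDF_of_nonpos le_rfl]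

lemma moment_aux {K : ℕ} {Ω : Type*} [MeasurableSpace Ω] (μ : Measure Ω) [IsProbabilityMeasure μ]
    (α : Fin K → ℝ) (hα : ∀ i, 0 < α i)
    (G : Fin K → Ω → ℝ) (hGmeas : ∀ i, Measurable (G i))
    (hGindep : iIndepFun G μ)
    (hGlaw : ∀ i, μ.map (G i) = gammaMeasure (α i) 1)
    (hpos : ∀ᵐ ω ∂μ, ∀ i, 0 < G i ω) (k : Fin K) (m : ℕ) :
    ENNReal.ofReal m.factorial * ∫⁻ ω, ENNReal.ofReal ((G k ω / ∑ j, G j ω) ^ (m + 1)) ∂μ =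
      ENNReal.ofReal (gratio (α k) (m + 1)) *
        ∫⁻ t in Set.Ioi (0 : ℝ), ENNReal.ofReal (t ^ m * (1 + t) ^ (-(∑ j, α j + (m + 1 : ℕ)))) := by
  have hSm : Measurable fun ω => ∑ j, G j ω := Finset.measurable_fun_sum _ fun i _ => hGmeas i
  have hGk := hGmeas k
  have h1 : ENNReal.ofReal m.factorial *
        ∫⁻ ω, ENNReal.ofReal ((G k ω / ∑ j, G j ω) ^ (m + 1)) ∂μ =
      ∫⁻ ω, (∫⁻ t in Set.Ioi (0 : ℝ), ENNReal.ofReal (G k ω ^ (m + 1)) *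
        ENNReal.ofReal (t ^ m * Real.exp (-((∑ j, G j ω) * t)))) ∂μ := by
    rw [← lintegral_const_mul _ (by fun_prop)]
    refine lintegral_congr_ae ?_
    filter_upwards [hpos] with ω hω
    have hS : 0 < ∑ j, G j ω := Finset.sum_pos (fun i _ => hω i) ⟨k, Finset.mem_univ k⟩
    have := hω k
    rw [lintegral_const_mul _ (by fun_prop), lintegral_Ioi_pow_exp hS,
      ← ENNReal.ofReal_mul (by positivity), ← ENNReal.ofReal_mul (by positivity)]
    congr 1
    rw [div_pow]; ring
  rw [h1, lintegral_lintegral_swap (by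
    apply Measurable.aemeasurable
    unfold Function.uncurry
    fun_prop), ← lintegral_const_mul _ (by fun_prop)]
  refine setLIntegral_congr_fun measurableSet_Ioi fun t ht => ?_
  have ht : 0 < t := ht
  have h1t : 0 < 1 + t := by linarith
  let e : Fin K → ℕ := fun i => if i = k then m + 1 else 0
  let f : Fin K → ℝ → ENNReal := fun i x => ENNReal.ofReal (x ^ e i * Real.exp (-(t * x)))
  have hf : ∀ i, Measurable (f i) := fun i => by fun_prop
  have h2 : ∫⁻ ω, ENNReal.ofReal (G k ω ^ (m + 1)) *
        ENNReal.ofReal (t ^ m * Real.exp (-((∑ j, G j ω) * t))) ∂μ =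
      ENNReal.ofReal (t ^ m) * ∫⁻ ω, ∏ i, f i (G i ω) ∂μ := by
    rw [← lintegral_const_mul _ (by fun_prop)]
    refine lintegral_congr_ae ?_
    filter_upwards [hpos] with ω hω
    have := hω k
    rw [← ENNReal.ofReal_prod_of_nonneg (fun i _ => by have := hω i; positivity),
      ← ENNReal.ofReal_mul (by positivity), ← ENNReal.ofReal_mul (by positivity),
      Finset.prod_mul_distrib, ← Real.exp_sum]
    have : ∏ i, G i ω ^ e i = G k ω ^ (m + 1) := by
      rw [Finset.prod_eq_single k] <;> simp +contextual [e]
    rw [this, Finset.sum_neg_distrib, ← Finset.mul_sum]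
    congr 1
    rw [mul_comm t]; ring
  have h3 : ∫⁻ ω, ∏ i, f i (G i ω) ∂μ = ∏ i, ∫⁻ ω, f i (G i ω) ∂μ :=
    lintegral_prod_eq_prod_lintegral_of_indepFun Finset.univ (fun i ω => f i (G i ω))
      (hGindep.comp f hf) (fun i => (hf i).comp (hGmeas i))
  have h4 : ∀ i, ∫⁻ ω, f i (G i ω) ∂μ =
      ENNReal.ofReal (gratio (α i) (e i) * (1 + t) ^ (-(α i + e i))) := fun i => by
    rw [← lintegral_map (hf i) (hGmeas i), hGlaw i]
    exact lintegral_gamma_pow_exp (hα i) ht _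
  have hgn := fun i => gratio_pos (hα i) (e i)
  have hgk := gratio_pos (hα k) (m + 1)
  beta_reduce
  rw [h2, h3, Finset.prod_congr rfl fun i _ => h4 i,
    ← ENNReal.ofReal_prod_of_nonneg (fun i _ => by have := hgn i; positivity),
    ← ENNReal.ofReal_mul (by positivity), ← ENNReal.ofReal_mul (by positivity),
    Finset.prod_mul_distrib]
  have h5 : ∏ i, gratio (α i) (e i) = gratio (α k) (m + 1) := by
    rw [Finset.prod_eq_single k]
    · simp [e]
    · intro b _ hb; simp [e, hb, gratio_zero (hα b)]
    · simp
  rw [h5, ← Real.rpow_sum_of_pos h1t, Finset.sum_neg_distrib, Finset.sum_add_distrib]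
  have h6 : ∑ i, (e i : ℝ) = (m + 1 : ℕ) := by
    simp [e]
  rw [h6]
  congr 1; ring

lemma moment {K : ℕ} {Ω : Type*} [MeasurableSpace Ω] (μ : Measure Ω) [IsProbabilityMeasure μ]
    (α : Fin K → ℝ) (hα : ∀ i, 0 < α i)
    (G : Fin K → Ω → ℝ) (hGmeas : ∀ i, Measurable (G i))
    (hGindep : iIndepFun G μ)
    (hGlaw : ∀ i, μ.map (G i) = gammaMeasure (α i) 1)
    (hpos : ∀ᵐ ω ∂μ, ∀ i, 0 < G i ω) (k : Fin K) (m : ℕ) :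
    ∫ ω, (G k ω / ∑ j, G j ω) ^ (m + 1) ∂μ =
      gratio (α k) (m + 1) / gratio (∑ j, α j) (m + 1) := by
  have hα0 : 0 < ∑ j, α j := Finset.sum_pos (fun i _ => hα i) ⟨k, Finset.mem_univ k⟩
  have hSm : Measurable fun ω => ∑ j, G j ω := Finset.measurable_fun_sum _ fun i _ => hGmeas i
  have hGk := hGmeas k
  have A := moment_aux μ α hα G hGmeas hGindep hGlaw hpos k m
  have := isProbabilityMeasure_gammaMeasure hα0 one_pos
  have B := moment_aux (K := 1) (gammaMeasure (∑ j, α j) 1) (fun _ => ∑ j, α j) (fun _ => hα0)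
    (fun _ x => x) (fun _ => measurable_id) iIndepFun.of_subsingleton (fun _ => Measure.map_id)
    (by filter_upwards [gamma_ae_pos] with x hx _ using hx) 0 m
  have C : ∫⁻ x, ENNReal.ofReal ((x / ∑ _j : Fin 1, x) ^ (m + 1)) ∂(gammaMeasure (∑ j, α j) 1)
      = 1 := by
    rw [lintegral_congr_ae (g := fun _ => 1)]
    · simp
    · filter_upwards [gamma_ae_pos] with x hx
      simp [div_self hx.ne']
  rw [C, mul_one] at B
  simp only [Finset.univ_unique, Finset.sum_singleton] at B
  have hg := gratio_pos hα0 (m + 1)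
  have hgk := gratio_pos (hα k) (m + 1)
  have hfac : (0 : ℝ) < m.factorial := by positivity
  rw [integral_eq_lintegral_of_nonneg_ae]
  · have B' := congrArg ENNReal.toReal B
    have A' := congrArg ENNReal.toReal A
    rw [ENNReal.toReal_mul, ENNReal.toReal_ofReal hg.le, ENNReal.toReal_ofReal hfac.le] at B'
    rw [ENNReal.toReal_mul, ENNReal.toReal_mul, ENNReal.toReal_ofReal hgk.le,
      ENNReal.toReal_ofReal hfac.le] at A'
    rw [eq_div_iff hg.ne']
    apply mul_left_cancel₀ hfac.ne'
    rw [← mul_assoc, A', mul_assoc, mul_comm _ (gratio (∑ j, α j) (m + 1)), ← B']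
    ring
  · filter_upwards [hpos] with ω hω
    have := hω k
    have hS : 0 < ∑ j, G j ω := Finset.sum_pos (fun i _ => hω i) ⟨k, Finset.mem_univ k⟩
    simp only [Pi.zero_apply]
    positivity
  · exact Measurable.aestronglyMeasurable (by fun_prop)

/-- **Dirichlet-expected mean-squared-error loss.**
Let `π` be a Dirichlet(α)-distributed random vector, realized as
`π_i = G_i / (G_1 + ⋯ + G_K)` where the `G_i` are independent Gamma(α_i, 1)
random variables, let `p = α/α₀`, and let `y ∈ {0,1}^K` be one-hot.  Then
`𝔼[Σ_k (y_k − π_k)²] = Σ_k (y_k − p_k)² + Σ_k p_k(1 − p_k)/(α₀ + 1)`. -/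
theorem dirichlet_expected_mse {K : ℕ} (hK : 0 < K)
    {Ω : Type*} [MeasurableSpace Ω] (μ : Measure Ω) [IsProbabilityMeasure μ]
    (α : Fin K → ℝ) (hα : ∀ i, 0 < α i)
    (G : Fin K → Ω → ℝ) (hGmeas : ∀ i, Measurable (G i))
    (hGindep : iIndepFun G μ)
    (hGlaw : ∀ i, μ.map (G i) = gammaMeasure (α i) 1)
    (π : Ω → EuclideanSpace ℝ (Fin K))
    (hπ : ∀ ω i, π ω i = G i ω / ∑ j, G j ω)
    (α₀ : ℝ) (hα₀ : α₀ = ∑ j, α j)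
    (p : Fin K → ℝ) (hp : ∀ i, p i = α i / α₀)
    (y : Fin K → ℝ) (hy01 : ∀ k, y k = 0 ∨ y k = 1) (hy1 : ∑ k, y k = 1) :
    ∫ ω, ∑ k, (y k - π ω k) ^ 2 ∂μ =
      ∑ k, (y k - p k) ^ 2 + ∑ k, p k * (1 - p k) / (α₀ + 1) := by
  have hpos : ∀ᵐ ω ∂μ, ∀ i, 0 < G i ω := by
    rw [ae_all_iff]
    intro i
    have h := gamma_ae_pos (a := α i)
    rw [← hGlaw i] at h
    exact ae_of_ae_map (hGmeas i).aemeasurable h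
  have hSm : Measurable fun ω => ∑ j, G j ω := Finset.measurable_fun_sum _ fun i _ => hGmeas i
  have hα0 : 0 < α₀ := hα₀ ▸ Finset.sum_pos (fun i _ => hα i) ⟨⟨0, hK⟩, Finset.mem_univ _⟩
  have hint : ∀ k n, Integrable (fun ω => (G k ω / ∑ j, G j ω) ^ n) μ := by
    intro k n
    have hGk := hGmeas k
    refine Integrable.of_bound (Measurable.aestronglyMeasurable (by fun_prop)) 1 ?_
    filter_upwards [hpos] with ω hω
    have := hω k
    have hS : 0 < ∑ j, G j ω := Finset.sum_pos (fun i _ => hω i) ⟨k, Finset.mem_univ k⟩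
    rw [Real.norm_of_nonneg (by positivity)]
    refine pow_le_one₀ (by positivity) ((div_le_one hS).2 ?_)
    exact Finset.single_le_sum (fun i _ => (hω i).le) (Finset.mem_univ k)
  have hterm : ∀ k, Integrable (fun ω => (y k - G k ω / ∑ j, G j ω) ^ 2) μ ∧
      ∫ ω, (y k - G k ω / ∑ j, G j ω) ^ 2 ∂μ = (y k - p k) ^ 2 + p k * (1 - p k) / (α₀ + 1) := by
    intro k
    have h1 := hint k 1
    have h2 := hint k 2
    have m1 := moment μ α hα G hGmeas hGindep hGlaw hpos k 0
    have m2 := moment μ α hα G hGmeas hGindep hGlaw hpos k 1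
    rw [← hα₀] at m1 m2
    norm_num only [zero_add, one_add_one_eq_two] at m1 m2
    rw [gratio_one (hα k), gratio_one hα0] at m1
    rw [gratio_two (hα k), gratio_two hα0] at m2
    have e : (fun ω => (y k - G k ω / ∑ j, G j ω) ^ 2) = fun ω =>
        (y k ^ 2 - 2 * y k * (G k ω / ∑ j, G j ω) ^ 1) + (G k ω / ∑ j, G j ω) ^ 2 := by
      funext ω; ring
    have h3 : Integrable (fun ω => y k ^ 2 - 2 * y k * (G k ω / ∑ j, G j ω) ^ 1) μ :=
      (integrable_const _).sub (h1.const_mul _)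
    rw [e]
    refine ⟨h3.add h2, ?_⟩
    rw [integral_add h3 h2, integral_sub (integrable_const _) (h1.const_mul _),
      integral_const_mul, m2]
    simp only [pow_one] at m1 ⊢
    rw [m1, hp k]
    simp only [integral_const, probReal_univ, smul_eq_mul]
    field_simp
    ring
  simp only [hπ]
  rw [integral_finsetSum _ fun k _ => (hterm k).1, ← Finset.sum_add_distrib]
  exact Finset.sum_congr rfl fun k _ => (hterm k).2
end

section
/- Let α ∈ ℝ_{>0}^K, α₀ = Σ_{j=1}^K α_j, p = α/α₀, let π be a Dirichlet(α)-distributed random vector, and fix a target class index y ∈ {1,…,K} with p_y = α_y/α₀. If p_y ≥ δ for some δ > 0, then |𝔼[−log π_y] − (−log p_y)| ≤ (1 + δ⁻¹)/α₀. -/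
open MeasureTheory ProbabilityTheory Set Filter Topology

lemma gm_density (a : ℝ) (f : ℝ → ℝ) :
    (fun x => (gammaPDF a 1 x).toReal • f x) = (Ici (0:ℝ)).indicator
      (fun x => (Real.Gamma a)⁻¹ * (x ^ (a-1) * Real.exp (-x) * f x)) ∨ ¬ 0 < a := by
  by_cases ha : 0 < a
  · left
    ext x
    rw [gammaPDF, ENNReal.toReal_ofReal (gammaPDFReal_nonneg ha one_pos x)]
    by_cases hx : 0 ≤ x
    · simp [gammaPDFReal, hx]; ring
    · simp [gammaPDFReal, hx]
  · exact Or.inr ha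

lemma gm_integrable {a : ℝ} (ha : 0 < a) (f : ℝ → ℝ) :
    Integrable f (gammaMeasure a 1) ↔
      IntegrableOn (fun x => x ^ (a-1) * Real.exp (-x) * f x) (Ioi 0) := by
  have hm : Measurable (gammaPDF a 1) := (measurable_gammaPDFReal a 1).ennreal_ofReal
  rw [gammaMeasure, integrable_withDensity_iff_integrable_smul' hm
    (ae_of_all _ fun x => ENNReal.ofReal_lt_top), (gm_density a f).resolve_right (not_not.2 ha),
    integrable_indicator_iff measurableSet_Ici, integrableOn_Ici_iff_integrableOn_Ioi]
  exact integrable_const_mul_iff (IsUnit.mk0 _ (inv_ne_zero (Real.Gamma_pos_of_pos ha).ne')) _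

lemma gm_integral {a : ℝ} (ha : 0 < a) (f : ℝ → ℝ) :
    ∫ x, f x ∂(gammaMeasure a 1) =
      (Real.Gamma a)⁻¹ * ∫ x in Ioi 0, x ^ (a-1) * Real.exp (-x) * f x := by
  have hm : Measurable (gammaPDF a 1) := (measurable_gammaPDFReal a 1).ennreal_ofReal
  rw [gammaMeasure, integral_withDensity_eq_integral_toReal_smul hm
    (ae_of_all _ fun x => ENNReal.ofReal_lt_top), (gm_density a f).resolve_right (not_not.2 ha),
    integral_indicator measurableSet_Ici, integral_Ici_eq_integral_Ioi, integral_const_mul]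

lemma gm_pos {a : ℝ} (ha : 0 < a) : ∀ᵐ x ∂(gammaMeasure a 1), 0 < x := by
  have hm : Measurable (gammaPDF a 1) := (measurable_gammaPDFReal a 1).ennreal_ofReal
  rw [gammaMeasure, ae_withDensity_iff hm]
  have : ∀ᵐ x : ℝ, x ≠ 0 := by simp [ae_iff]
  filter_upwards [this] with x hx h
  by_contra hneg
  exact h (gammaPDF_of_neg (lt_of_le_of_ne (not_lt.1 hneg) hx))

lemma gm_mgf {a : ℝ} (ha : 0 < a) (t : ℝ) (ht : t < 1) :
    mgf id (gammaMeasure a 1) t = (1 / (1 - t)) ^ a := by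
  rw [mgf, gm_integral ha]
  have h := Real.integral_rpow_mul_exp_neg_mul_Ioi ha (sub_pos.2 ht)
  have : ∀ x : ℝ, x ^ (a-1) * Real.exp (-x) * Real.exp (t * id x) =
     x ^ (a - 1) * Real.exp (-((1-t) * x)) := by
    intro x; rw [mul_assoc, ← Real.exp_add]; simp; left; ring
  simp_rw [this]
  rw [h]
  have := (Real.Gamma_pos_of_pos ha).ne'
  field_simp

lemma gm_int_exp {a : ℝ} (ha : 0 < a) (t : ℝ) (ht : t < 1) :
    Integrable (fun x => Real.exp (t * id x)) (gammaMeasure a 1) := by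
  by_contra h
  have h1 := gm_mgf ha t ht
  rw [mgf_undef h] at h1
  have : 0 < 1 - t := sub_pos.2 ht
  have : 0 < (1 / (1 - t)) ^ a := by positivity
  linarith

lemma gm_mgf' {a : ℝ} (ha : 0 < a) (t : ℝ) (ht : 1 ≤ t) :
    mgf id (gammaMeasure a 1) t = 0 := by
  apply mgf_undef
  rw [gm_integrable ha]
  intro h
  apply not_integrableOn_Ioi_rpow (a - 1)
  refine Integrable.mono h (by fun_prop) ?_
  filter_upwards [ae_restrict_mem measurableSet_Ioi] with x hx
  have hx : 0 < x := hx
  have h1 : 0 < x ^ (a-1) := by positivity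
  rw [Real.norm_of_nonneg h1.le, Real.norm_of_nonneg (by positivity), mul_assoc, ← Real.exp_add]
  have : 1 ≤ Real.exp (-x + t * id x) := by
    apply Real.one_le_exp; simp; nlinarith
  nlinarith

lemma ext_mgf {Ω : Type*} [MeasurableSpace Ω] (μ : Measure Ω) [IsProbabilityMeasure μ]
    (X : Ω → ℝ) (hX : Measurable X) {a : ℝ} (ha : 0 < a) 
    (h : mgf X μ = mgf id (gammaMeasure a 1)) : μ.map X = gammaMeasure a 1 := by
  have := isProbabilityMeasure_gammaMeasure ha one_pos
  have h0 : mgf id (μ.map X) = mgf id (gammaMeasure a 1) := by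
    rw [← h, mgf_id_map hX.aemeasurable]
  have : IsProbabilityMeasure (μ.map X) := Measure.isProbabilityMeasure_map hX.aemeasurable
  have h1 := eqOn_complexMGF_of_mgf h0
  rw [integrableExpSet_eq_of_mgf h0] at h1
  have h2 : Iio (1:ℝ) ⊆ interior (integrableExpSet id (gammaMeasure a 1)) :=
    interior_maximal (fun t ht => gm_int_exp ha t ht) isOpen_Iio
  apply Measure.ext_of_charFun
  ext t
  rw [← complexMGF_id_mul_I, ← complexMGF_id_mul_I]
  apply h1
  apply h2
  simp

lemma sum_law {K : ℕ} (hK : 0 < K)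
    {Ω : Type*} [MeasurableSpace Ω] (μ : Measure Ω) [IsProbabilityMeasure μ]
    (α : Fin K → ℝ) (hα : ∀ i, 0 < α i)
    (G : Fin K → Ω → ℝ) (hGmeas : ∀ i, Measurable (G i))
    (hGindep : iIndepFun G μ)
    (hGlaw : ∀ i, μ.map (G i) = gammaMeasure (α i) 1) :
    μ.map (∑ i, G i) = gammaMeasure (∑ i, α i) 1 := by
  have hpos : 0 < ∑ i, α i := by
    have : Nonempty (Fin K) := ⟨⟨0, hK⟩⟩
    exact Finset.sum_pos (fun i _ => hα i) Finset.univ_nonempty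
  apply ext_mgf _ _ (by fun_prop) hpos
  ext t
  rw [hGindep.mgf_sum hGmeas]
  have : ∀ i, mgf (G i) μ t = mgf id (gammaMeasure (α i) 1) t := by
    intro i; rw [← hGlaw, mgf_id_map (hGmeas i).aemeasurable]
  simp_rw [this]
  by_cases ht : t < 1
  · rw [gm_mgf hpos t ht, Real.rpow_sum_of_pos (by have := sub_pos.2 ht; positivity)]
    exact Finset.prod_congr rfl fun i _ => gm_mgf (hα i) t ht
  · rw [gm_mgf' hpos t (not_lt.1 ht)]
    exact Finset.prod_eq_zero (Finset.mem_univ ⟨0, hK⟩) (gm_mgf' (hα _) t (not_lt.1 ht))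

lemma abs_log_le {x e : ℝ} (hx : 0 < x) (he : 0 < e) :
    |Real.log x| ≤ (x ^ e + x ^ (-e)) / e := by
  have h1 := Real.log_le_rpow_div hx.le he
  have h2 := Real.log_le_rpow_div (inv_pos.2 hx).le he
  rw [Real.log_inv, Real.inv_rpow hx.le, ← Real.rpow_neg hx.le] at h2
  have h3 : 0 < x ^ e / e := by positivity
  have h4 : 0 < x ^ (-e) / e := by positivity
  rw [abs_le, add_div]
  constructor <;> linarith

lemma int_log {a : ℝ} (ha : 0 < a) :
    IntegrableOn (fun x => x ^ (a-1) * Real.exp (-x) * Real.log x) (Ioi 0) := by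
  have e : 0 < a / 2 := by positivity
  have h1 := Real.GammaIntegral_convergent (s := a + a/2) (by positivity)
  have h2 := Real.GammaIntegral_convergent (s := a - a/2) (by linarith)
  refine Integrable.mono' ((h1.add h2).div_const (a/2)) ?_ ?_
  · apply Measurable.aestronglyMeasurable; fun_prop
  filter_upwards [ae_restrict_mem measurableSet_Ioi] with x hx
  have hx : 0 < x := hx
  have h := abs_log_le hx e
  rw [norm_mul, Real.norm_of_nonneg (by positivity : 0 ≤ x ^ (a-1) * Real.exp (-x)), Real.norm_eq_abs]
  refine (mul_le_mul_of_nonneg_left h (by positivity)).trans (le_of_eq ?_)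
  simp only [Pi.add_apply]
  rw [show a + a/2 - 1 = (a - 1) + a/2 by ring, show a - a/2 - 1 = (a-1) + (-(a/2)) by ring,
    Real.rpow_add hx, Real.rpow_add hx]
  ring

lemma gm_int_log {a : ℝ} (ha : 0 < a) : Integrable Real.log (gammaMeasure a 1) :=
  (gm_integrable ha _).2 (int_log ha)

lemma rpow_shift {a x : ℝ} (hx : 0 < x) : x ^ a = x ^ (a-1) * x := by
  rw [← Real.rpow_add_one hx.ne']; simp

lemma gm_int_xlog {a : ℝ} (ha : 0 < a) :
    Integrable (fun x => x * Real.log x) (gammaMeasure a 1) := by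
  rw [gm_integrable ha]
  refine (int_log (a := a + 1) (by positivity)).congr_fun (fun x hx => ?_) measurableSet_Ioi
  simp only [add_sub_cancel_right]
  rw [rpow_shift (a := a) hx]; ring

lemma gm_int_id {a : ℝ} (ha : 0 < a) :
    Integrable (fun x => x) (gammaMeasure a 1) := by
  rw [gm_integrable ha]
  refine (Real.GammaIntegral_convergent (s := a + 1) (by positivity)).congr_fun (fun x hx => ?_)
    measurableSet_Ioi
  simp only [add_sub_cancel_right]
  rw [rpow_shift (a := a) hx]; ring

lemma gm_mean {a : ℝ} (ha : 0 < a) : ∫ x, x ∂(gammaMeasure a 1) = a := by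
  rw [gm_integral ha]
  have h := Real.Gamma_eq_integral (s := a + 1) (by positivity)
  rw [Real.Gamma_add_one ha.ne'] at h
  have h2 : ∫ x in Ioi (0:ℝ), x ^ (a-1) * Real.exp (-x) * x = a * Real.Gamma a := by
    rw [h]
    refine setIntegral_congr_fun measurableSet_Ioi (fun x hx => ?_)
    simp only [add_sub_cancel_right]
    rw [rpow_shift (a := a) hx]; ring
  rw [h2]
  have := (Real.Gamma_pos_of_pos ha).ne'
  field_simp

lemma gm_parts {a : ℝ} (ha : 0 < a) :
    ∫ x, (a * Real.log x + 1 - x * Real.log x) ∂(gammaMeasure a 1) = 0 := by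
  have := isProbabilityMeasure_gammaMeasure ha one_pos
  have hint : Integrable (fun x => a * Real.log x + 1 - x * Real.log x) (gammaMeasure a 1) :=
    (((gm_int_log ha).const_mul a).add (integrable_const 1)).sub (gm_int_xlog ha)
  rw [gm_integrable ha] at hint
  rw [gm_integral ha]
  have := integral_Ioi_of_hasDerivAt_of_tendsto (a := (0:ℝ)) (m := 0)
    (f := fun x => x ^ a * Real.exp (-x) * Real.log x) ?_ ?_ hint ?_
  · rw [this]; simp
  · rw [ContinuousWithinAt, ← Ioi_union_left, nhdsWithin_union, tendsto_sup]
    constructor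
    · have h := tendsto_log_mul_rpow_nhdsGT_zero ha
      have h2 : Tendsto (fun x : ℝ => Real.exp (-x)) (𝓝[>] 0) (𝓝 (Real.exp (-0))) :=
        (Continuous.tendsto (by fun_prop) _).mono_left nhdsWithin_le_nhds
      convert h.mul h2 using 2
      · ring
      · simp
    · rw [nhdsWithin_singleton]
      exact tendsto_pure_nhds _ _
  · intro x hx
    have hx : 0 < x := hx
    have h1 := Real.hasDerivAt_rpow_const (x := x) (p := a) (Or.inl hx.ne')
    have h2 := (Real.hasDerivAt_exp (-x)).comp x (hasDerivAt_neg x)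
    have h3 := Real.hasDerivAt_log hx.ne'
    refine ((h1.mul h2).mul h3).congr_deriv ?_
    simp only [Function.comp, Pi.mul_apply]
    rw [rpow_shift (a := a) hx]
    field_simp
    ring
  · have h := tendsto_rpow_mul_exp_neg_mul_atTop_nhds_zero (a + 1) 1 one_pos
    refine squeeze_zero_norm' ?_ h
    filter_upwards [eventually_ge_atTop 1] with x hx
    have hx0 : 0 < x := by linarith
    have hl := Real.log_nonneg hx
    rw [Real.norm_of_nonneg (by positivity), Real.rpow_add_one hx0.ne']
    have := Real.log_le_self hx0.le
    rw [neg_one_mul]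
    have h5 : 0 < x ^ a * Real.exp (-x) := by positivity
    nlinarith

lemma gm_log_le {a : ℝ} (ha : 0 < a) :
    ∫ x, Real.log x ∂(gammaMeasure a 1) ≤ Real.log a := by
  have := isProbabilityMeasure_gammaMeasure ha one_pos
  have hi : Integrable (fun x => Real.log a - 1 + x * a⁻¹) (gammaMeasure a 1) :=
    (integrable_const _).add ((gm_int_id ha).mul_const _)
  have h : ∫ x, Real.log x ∂(gammaMeasure a 1) ≤
      ∫ x, (Real.log a - 1 + x * a⁻¹) ∂(gammaMeasure a 1) := by
    apply integral_mono_ae (gm_int_log ha) hi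
    filter_upwards [gm_pos ha] with x hx
    have := Real.log_le_sub_one_of_pos (div_pos hx ha)
    rw [Real.log_div hx.ne' ha.ne'] at this
    rw [← div_eq_mul_inv]; linarith
  rw [integral_add (integrable_const _) ((gm_int_id ha).mul_const _), integral_mul_const,
    gm_mean ha] at h
  simpa [ha.ne'] using h

lemma gm_le_log {a : ℝ} (ha : 0 < a) :
    Real.log a - 1 / a ≤ ∫ x, Real.log x ∂(gammaMeasure a 1) := by
  have := isProbabilityMeasure_gammaMeasure ha one_pos
  have hp := gm_parts ha
  have hi : Integrable (fun x => a * Real.log x + 1) (gammaMeasure a 1) :=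
    ((gm_int_log ha).const_mul a).add (integrable_const 1)
  rw [integral_sub hi (gm_int_xlog ha),
    integral_add ((gm_int_log ha).const_mul a) (integrable_const 1), integral_const_mul] at hp
  have h : ∫ x, ((Real.log a + 1) * x - a) ∂(gammaMeasure a 1) ≤
      ∫ x, x * Real.log x ∂(gammaMeasure a 1) := by
    apply integral_mono_ae (((gm_int_id ha).const_mul _).sub (integrable_const _)) (gm_int_xlog ha)
    filter_upwards [gm_pos ha] with x hx
    have := Real.log_le_sub_one_of_pos (div_pos ha hx)
    rw [Real.log_div ha.ne' hx.ne'] at this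
    have h2 := mul_le_mul_of_nonneg_left this hx.le
    have h3 : x * (a / x - 1) = a - x := by field_simp
    rw [h3] at h2
    simp only [Pi.sub_apply]
    nlinarith
  rw [integral_sub ((gm_int_id ha).const_mul _) (integrable_const _), integral_const_mul,
    gm_mean ha] at h
  simp at h hp
  have : a * (Real.log a - 1 / a) = a * Real.log a - 1 := by field_simp
  refine le_of_mul_le_mul_left ?_ ha
  rw [this]; linarith

/-- **Cross-entropy plug-in approximation.**
Let `π` be a Dirichlet(α)-distributed random vector, realized as
`π_i = G_i / (G_1 + ⋯ + G_K)` where the `G_i` are independent Gamma(α_i, 1)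
random variables, `α₀ = Σ_j α_j` and `p_y = α_y/α₀`.  If `p_y ≥ δ > 0`, then
`|𝔼[−log π_y] − (−log p_y)| ≤ (1 + δ⁻¹)/α₀`. -/
theorem dirichlet_ce_plugin_bound {K : ℕ} (hK : 0 < K)
    {Ω : Type*} [MeasurableSpace Ω] (μ : Measure Ω) [IsProbabilityMeasure μ]
    (α : Fin K → ℝ) (hα : ∀ i, 0 < α i)
    (G : Fin K → Ω → ℝ) (hGmeas : ∀ i, Measurable (G i))
    (hGindep : iIndepFun G μ)
    (hGlaw : ∀ i, μ.map (G i) = gammaMeasure (α i) 1)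
    (π : Ω → EuclideanSpace ℝ (Fin K))
    (hπ : ∀ ω i, π ω i = G i ω / ∑ j, G j ω)
    (α₀ : ℝ) (hα₀ : α₀ = ∑ j, α j)
    (y : Fin K) (pY : ℝ) (hpY : pY = α y / α₀)
    (δ : ℝ) (hδ : 0 < δ) (hpYδ : δ ≤ pY) :
    |(∫ ω, -Real.log (π ω y) ∂μ) - (-Real.log pY)| ≤ (1 + δ⁻¹) / α₀ := by
  have hS := sum_law hK μ α hα G hGmeas hGindep hGlaw
  rw [← hα₀] at hS
  have hpos : 0 < α₀ := by
    rw [hα₀]; exact Finset.sum_pos (fun i _ => hα i) ⟨y, Finset.mem_univ y⟩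
  have hSm : Measurable (∑ i, G i) := by fun_prop
  have tr : ∀ (X : Ω → ℝ) (a : ℝ), 0 < a → Measurable X → μ.map X = gammaMeasure a 1 →
      (∀ᵐ ω ∂μ, 0 < X ω) ∧ Integrable (fun ω => Real.log (X ω)) μ ∧
      Real.log a - 1 / a ≤ ∫ ω, Real.log (X ω) ∂μ ∧ ∫ ω, Real.log (X ω) ∂μ ≤ Real.log a := by
    intro X a ha hX hl
    have e : ∫ ω, Real.log (X ω) ∂μ = ∫ x, Real.log x ∂(gammaMeasure a 1) := by
      rw [← hl, integral_map hX.aemeasurable (Real.measurable_log.aestronglyMeasurable)]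
    refine ⟨?_, ?_, ?_, ?_⟩
    · have := gm_pos ha
      rw [← hl] at this
      exact ae_of_ae_map hX.aemeasurable this
    · have := gm_int_log ha
      rw [← hl] at this
      exact this.comp_measurable hX
    · rw [e]; exact gm_le_log ha
    · rw [e]; exact gm_log_le ha
  obtain ⟨s1, s2, s3, s4⟩ := tr _ _ hpos hSm hS
  obtain ⟨g1, g2, g3, g4⟩ := tr _ _ (hα y) (hGmeas y) (hGlaw y)
  have hI : ∫ ω, -Real.log (π ω y) ∂μ =
      ∫ ω, Real.log ((∑ i, G i) ω) ∂μ - ∫ ω, Real.log (G y ω) ∂μ := by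
    rw [← integral_sub s2 g2]
    apply integral_congr_ae
    filter_upwards [s1, g1] with ω h1 h2
    rw [Finset.sum_apply] at h1 ⊢
    rw [hπ, Real.log_div h2.ne' h1.ne']; ring
  have hl : Real.log pY = Real.log (α y) - Real.log α₀ := by
    rw [hpY, Real.log_div (hα y).ne' hpos.ne']
  have hb : 1 / α y ≤ δ⁻¹ / α₀ := by
    rw [hpY, le_div_iff₀ hpos] at hpYδ
    rw [← one_div, div_div]
    exact one_div_le_one_div_of_le (by positivity) hpYδ
  have hd : 0 < δ⁻¹ / α₀ := by positivity
  have hd' : 0 < 1 / α₀ := by positivity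
  rw [hI, hl, add_div, abs_le]
  constructor <;> linarith
end
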